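/- Let R be a pre-λ-ring with operations λ^i, let M be an R-module, and let Λ^i : M → M (i ≥ 1) be additive group homomorphisms with Λ^1(m) = m. Let R ⋊_λ M be the square-zero extension R ⋊ M with operations λ̃^0(r,m) = (1,0) and λ̃^i(r,m) = (λ^i(r), Σ_{j=1}^{i} Λ^j(m)·λ^{i−j}(r)) for i ≥ 1, and let π : R ⋊_λ M → R be the projection π(r,m) = r. Then the assignment d ↦ σ_d, where σ_d(r) = (r, d(r)), is a bijection from the set of additive homomorphisms d : R → M satisfying d(rs) = r·d(s) + d(r)·s and d(λ^i(r)) = Σ_{j=0}^{i−1} λ^j(r)·Λ^{i−j}(d(r)) for all i ≥ 1 (the λ-derivations), onto the set of ring homomorphisms σ : R → R ⋊_λ M with π ∘ σ = id_R and σ ∘ λ^i = λ̃^i ∘ σ for all i ≥ 0. -/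

import Mathlib

/-- Multiplication on the trivial square-zero extension `R ⋊ M`:
`(r,m)(s,n) = (rs, r·n + s·m)`. -/
def sqMul {R M : Type*} [CommRing R] [AddCommGroup M] [Module R M]
    (x y : R × M) : R × M :=
  (x.1 * y.1, x.1 • y.2 + y.1 • x.2)

/-- The operations of the semidirect product `R ⋊_λ M`:
`λ̃^0(r,m) = (1,0)` and `λ̃^i(r,m) = (λ^i(r), Σ_{j=1}^{i} Λ^j(m)·λ^{i−j}(r))` for `i ≥ 1`. -/
def lamSd {R M : Type*} [CommRing R] [AddCommGroup M] [Module R M]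
    (lam : ℕ → R → R) (Λ : ℕ → M → M) (i : ℕ) (x : R × M) : R × M :=
  if i = 0 then ((1 : R), (0 : M))
  else (lam i x.1, ∑ j ∈ Finset.Icc 1 i, lam (i - j) x.1 • Λ j x.2)

/-! A section of the projection `R × M → R` is the graph `r ↦ (r, d r)` of its second coordinate
`d`, and for a graph each condition on sections is, read off in the second coordinate, the
corresponding condition on `d`. The two conditions on sections with no counterpart for `d`,
preservation of `1` and the operation `λ̃^0`, both amount to `d 1 = 0`, which is the Leibniz rule at
`1 * 1`. -/

theorem sum_range_eq_sum_Icc_sub {A : Type*} [AddCommMonoid A] (f : ℕ → ℕ → A) (n : ℕ) :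
    ∑ j ∈ Finset.range n, f j (n - j) = ∑ j ∈ Finset.Icc 1 n, f (n - j) j := by
  refine Finset.sum_nbij' (n - ·) (n - ·) (by grind) (by grind) (by grind) (by grind) fun j hj => ?_
  rw [Nat.sub_sub_self (Finset.mem_range.mp hj).le]

theorem map_one_eq_zero_of_leibniz {R M : Type*} [Monoid R] [AddMonoid M] [IsLeftCancelAdd M]
    [MulAction R M] {d : R → M} (hd : ∀ r s : R, d (r * s) = r • d s + s • d r) : d 1 = 0 := by
  have h : d 1 = d 1 + d 1 := by simpa only [mul_one, one_smul] using hd 1 1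
  exact left_eq_add.mp h

theorem bijOn_graph {α β : Type*} {D : Set (α → β)} {S : Set (α → α × β)}
    (hfst : ∀ σ ∈ S, ∀ a, (σ a).1 = a) (hgraph : ∀ d : α → β, (fun a => (a, d a)) ∈ S ↔ d ∈ D) :
    Set.BijOn (fun (d : α → β) a => (a, d a)) D S := by
  refine ⟨fun d hd => (hgraph d).mpr hd, fun d _ e _ hde => ?_, fun σ hσ => ?_⟩
  · exact funext fun a => congrArg Prod.snd (congrFun hde a)
  · have graph_snd : (fun a => (a, (σ a).2)) = σ :=
      funext fun a => Prod.ext (hfst σ hσ a).symm rfl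
    exact ⟨fun a => (σ a).2, (hgraph _).mp (graph_snd ▸ hσ), graph_snd⟩

section LambdaDerivation

variable {R M : Type*} [CommRing R] [AddCommGroup M] [Module R M]
  (lam : ℕ → R → R) (Λ : ℕ → M → M)

/-- `d : R → M` is a λ-derivation: an additive map satisfying the Leibniz rule and compatible with
the operations `λ^i` on `R` and `Λ^i` on `M`. The families `lam` and `Λ` are arbitrary here, with no
pre-λ-ring axioms built in. -/
def IsLambdaDerivation (d : R → M) : Prop :=
  (∀ r s : R, d (r + s) = d r + d s) ∧
  (∀ r s : R, d (r * s) = r • d s + s • d r) ∧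
  (∀ i, 1 ≤ i → ∀ r : R, d (lam i r) = ∑ j ∈ Finset.range i, lam j r • Λ (i - j) (d r))

/-- `σ : R → R ⋊_λ M` is a section of the projection to `R` which is a ring homomorphism and
commutes with the operations. The extension is encoded as `R × M` with its componentwise addition,
the multiplication `sqMul`, the unit `(1, 0)` and the operations `lamSd lam Λ`. -/
def IsLambdaSection (σ : R → R × M) : Prop :=
  (∀ r s : R, σ (r + s) = σ r + σ s) ∧
  (∀ r s : R, σ (r * s) = sqMul (σ r) (σ s)) ∧
  σ 1 = ((1 : R), (0 : M)) ∧
  (∀ r : R, (σ r).1 = r) ∧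
  (∀ i : ℕ, ∀ r : R, σ (lam i r) = lamSd lam Λ i (σ r))

theorem lamSd_zero (x : R × M) : lamSd lam Λ 0 x = (1, 0) :=
  if_pos rfl

theorem lamSd_of_one_le {i : ℕ} (hi : 1 ≤ i) (x : R × M) :
    lamSd lam Λ i x = (lam i x.1, ∑ j ∈ Finset.range i, lam j x.1 • Λ (i - j) x.2) := by
  rw [lamSd, if_neg (Nat.one_le_iff_ne_zero.mp hi),
    sum_range_eq_sum_Icc_sub fun j k => lam j x.1 • Λ k x.2]

variable {lam Λ}

theorem isLambdaSection_graph_iff (hlam0 : ∀ r : R, lam 0 r = 1) {d : R → M} :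
    IsLambdaSection lam Λ (fun r => (r, d r)) ↔ IsLambdaDerivation lam Λ d := by
  constructor
  · rintro ⟨hadd, hmul, -, -, hlam⟩
    refine ⟨fun r s => congrArg Prod.snd (hadd r s), fun r s => congrArg Prod.snd (hmul r s),
      fun i hi r => ?_⟩
    exact congrArg Prod.snd ((hlam i r).trans (lamSd_of_one_le lam Λ hi _))
  · rintro ⟨hadd, hmul, hlam⟩
    have hone : d 1 = 0 := map_one_eq_zero_of_leibniz hmul
    refine ⟨fun r s => Prod.ext rfl (hadd r s), fun r s => Prod.ext rfl (hmul r s),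
      Prod.ext rfl hone, fun _ => rfl, fun i r => ?_⟩
    rcases Nat.eq_zero_or_pos i with rfl | hi
    · rw [lamSd_zero, hlam0]
      exact Prod.ext rfl hone
    · rw [lamSd_of_one_le lam Λ hi]
      exact Prod.ext rfl (hlam i hi r)

theorem stmt8_general (hlam0 : ∀ r : R, lam 0 r = 1) :
    Set.BijOn (fun (d : R → M) => fun r : R => ((r, d r) : R × M))
      {d | IsLambdaDerivation lam Λ d} {σ | IsLambdaSection lam Λ σ} :=
  bijOn_graph (fun _ ⟨_, _, _, hfst, _⟩ => hfst) fun _ => isLambdaSection_graph_iff hlam0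

end LambdaDerivation

theorem stmt8 {R M : Type*} [CommRing R] [AddCommGroup M] [Module R M]
    (lam : ℕ → R → R) (Λ : ℕ → M → M)
    -- `R` is a pre-λ-ring.
    (hlam0 : ∀ r : R, lam 0 r = 1)
    (hlam1 : ∀ r : R, lam 1 r = r)
    (hlamAdd : ∀ i, ∀ r s : R,
      lam i (r + s) = ∑ k ∈ Finset.range (i + 1), lam k r * lam (i - k) s)
    (hΛadd : ∀ i, 1 ≤ i → ∀ m m' : M, Λ i (m + m') = Λ i m + Λ i m')
    (hΛ1 : ∀ m : M, Λ 1 m = m) :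
    -- `d ↦ σ_d` with `σ_d(r) = (r, d r)` is a bijection from the λ-derivations of `R`
    -- with values in `M` onto the ring-homomorphism sections of `π : R ⋊_λ M → R`
    -- commuting with all the operations `λ̃^i` (i ≥ 0).
    Set.BijOn (fun (d : R → M) => fun r : R => ((r, d r) : R × M))
      {d : R → M |
        (∀ r s : R, d (r + s) = d r + d s) ∧
        (∀ r s : R, d (r * s) = r • d s + s • d r) ∧
        (∀ i, 1 ≤ i → ∀ r : R,
          d (lam i r) = ∑ j ∈ Finset.range i, lam j r • Λ (i - j) (d r))}
      {σ : R → R × M |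
        (∀ r s : R, σ (r + s) = σ r + σ s) ∧
        (∀ r s : R, σ (r * s) = sqMul (σ r) (σ s)) ∧
        σ 1 = ((1 : R), (0 : M)) ∧
        (∀ r : R, (σ r).1 = r) ∧
        (∀ i : ℕ, ∀ r : R, σ (lam i r) = lamSd lam Λ i (σ r))} := by
  exact stmt8_general hlam0
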